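/- Under (A1)–(A4), suppose T ≥ 1, the initial action satisfies g(x_1) ≤ −α for some α ∈ (0, ε], and the algorithm is run with parameters ρ = α/√T and η = ξ·ρ/(G_f·G_g). Then the iterates satisfy g(x_t) ≤ 0 for all t ∈ {1,…,T}. -/

import Mathlib

open scoped RealInnerProductSpace Classical

noncomputable def projBall {d : ℕ} (R : ℝ) (v : EuclideanSpace ℝ (Fin d)) :
    EuclideanSpace ℝ (Fin d) := (R / max R ‖v‖) • v

def IsSubgradAt {d : ℕ} (g : EuclideanSpace ℝ (Fin d) → ℝ)
    (x s : EuclideanSpace ℝ (Fin d)) : Prop :=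
  ∀ y, g x + ⟪s, y - x⟫ ≤ g y

/-!
The proof tracks the distance `D t` from `x t` to the tightened set `{z | g z ≤ -ρ}` and shows
`D t ≤ ρ / Gg`, which suffices because `g` grows at rate at most `Gg`.

The Polyak step is the projection onto the half-space `{z | g (x t) + ⟪s t, z - x t⟫ ≤ -ρ}`, which
contains the tightened set. It is nonexpansive, so the gradient displacement costs at most
`‖y t - x t‖ ≤ (1 - √γ) * ρ / Gg`; applied to `x t` itself it decreases the squared distance by
`([g (x t) + ρ]₊ / ‖s t‖) ^ 2`, which is at least `(σ / Gg) ^ 2 * D t ^ 2` by the error bound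
`σ * D t ≤ [g (x t) + ρ]₊`. Hence `D (t + 1) ≤ (1 - √γ) * ρ / Gg + √γ * D t`.

For the error bound, let `q` be the projection of `x` onto a sublevel set. Lagrange duality turns
the supporting half-space at `q` into a subgradient of `g` at `q` parallel to `x - q`, whose norm is
at least `σ`.
-/

section LagrangeMultiplier

variable {E : Type*} [AddCommGroup E] [Module ℝ E] {S : Set E} {f ℓ : E → ℝ} {c : ℝ}

lemma sub_div_le_sub_div_of_neg_of_pos (hf : ConvexOn ℝ S f) (hℓ : ConcaveOn ℝ S ℓ)
    (hc : ∀ z ∈ S, 0 ≤ ℓ z → c ≤ f z) {z w : E} (hz : z ∈ S) (hw : w ∈ S)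
    (hzneg : ℓ z < 0) (hwpos : 0 < ℓ w) : (f z - c) / ℓ z ≤ (f w - c) / ℓ w := by
  have hgap : 0 < ℓ w - ℓ z := by linarith
  -- the weights at which the chord of `ℓ` from `z` to `w` vanishes
  set a := ℓ w / (ℓ w - ℓ z) with ha
  set b := -ℓ z / (ℓ w - ℓ z) with hb
  have ha0 : 0 ≤ a := by positivity
  have hb0 : 0 ≤ b := div_nonneg (by linarith) hgap.le
  have hab : a + b = 1 := by rw [ha, hb]; field_simp; ring
  have hℓ_nonneg : 0 ≤ ℓ (a • z + b • w) := by
    refine le_of_eq_of_le ?_ (hℓ.2 hz hw ha0 hb0 hab)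
    rw [smul_eq_mul, smul_eq_mul, ha, hb]; field_simp; ring
  have hchord : c ≤ a * f z + b * f w :=
    (hc _ (hf.1 hz hw ha0 hb0 hab) hℓ_nonneg).trans (hf.2 hz hw ha0 hb0 hab)
  have hcross : c * (ℓ w - ℓ z) ≤ ℓ w * f z - ℓ z * f w := by
    calc c * (ℓ w - ℓ z) ≤ (a * f z + b * f w) * (ℓ w - ℓ z) := by gcongr
      _ = ℓ w * f z - ℓ z * f w := by rw [ha, hb]; field_simp; ring
  rw [← neg_div_neg_eq, div_le_div_iff₀ (neg_pos.2 hzneg) hwpos]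
  linarith

lemma exists_lagrange_multiplier (hf : ConvexOn ℝ S f) (hℓ : ConcaveOn ℝ S ℓ)
    (hc : ∀ z ∈ S, 0 ≤ ℓ z → c ≤ f z) (hslater : ∃ z ∈ S, 0 < ℓ z) :
    ∃ μ : ℝ, 0 ≤ μ ∧ ∀ z ∈ S, c + μ * ℓ z ≤ f z := by
  obtain ⟨z₀, hz₀, hz₀pos⟩ := hslater
  let slope : E → ℝ := fun z => (f z - c) / ℓ z
  obtain ⟨μ, hμ_lower, hμ_upper⟩ :
      (upperBounds (insert 0 (slope '' {z ∈ S | ℓ z < 0})) ∩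
        lowerBounds (slope '' {z ∈ S | 0 < ℓ z})).Nonempty := by
    refine exists_between_of_forall_le (Set.insert_nonempty _ _) ⟨_, z₀, ⟨hz₀, hz₀pos⟩, rfl⟩ ?_
    rintro _ (rfl | ⟨z, ⟨hz, hzneg⟩, rfl⟩) _ ⟨w, ⟨hw, hwpos⟩, rfl⟩
    · exact div_nonneg (sub_nonneg.2 (hc w hw hwpos.le)) hwpos.le
    · exact sub_div_le_sub_div_of_neg_of_pos hf hℓ hc hz hw hzneg hwpos
  refine ⟨μ, hμ_lower (Set.mem_insert _ _), fun z hz => ?_⟩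
  rcases lt_trichotomy (ℓ z) 0 with hneg | hzero | hpos
  · have hle : slope z ≤ μ := hμ_lower (Set.mem_insert_of_mem _ ⟨z, ⟨hz, hneg⟩, rfl⟩)
    linarith [(div_le_iff_of_neg hneg).1 hle]
  · simpa [hzero] using hc z hz hzero.ge
  · have hle : μ ≤ slope z := hμ_upper ⟨z, ⟨hz, hpos⟩, rfl⟩
    linarith [(le_div_iff₀ hpos).1 hle]

end LagrangeMultiplier

section Projection

lemma exists_infDist_sublevel_eq_dist {α : Type*} [PseudoMetricSpace α] [ProperSpace α] {f : α → ℝ}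
    (hf : Continuous f) {c : ℝ} (hne : {z | f z ≤ c}.Nonempty) (x : α) :
    ∃ q, f q ≤ c ∧ Metric.infDist x {z | f z ≤ c} = dist x q :=
  (isClosed_le hf continuous_const).exists_infDist_eq_dist hne x

variable {E : Type*} [NormedAddCommGroup E] [InnerProductSpace ℝ E]

lemma inner_sub_nonpos_of_infDist_eq_dist {K : Set E} (hK : Convex ℝ K) {x q : E} (hq : q ∈ K)
    (hdist : Metric.infDist x K = dist x q) : ∀ w ∈ K, ⟪x - q, w - q⟫ ≤ 0 := by
  refine (norm_eq_iInf_iff_real_inner_le_zero hK hq).1 ?_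
  simpa only [Metric.infDist_eq_iInf, dist_eq_norm] using hdist.symm

lemma le_of_inner_sub_nonneg {f : E → ℝ} (hf : Continuous f) {c : ℝ} {u q w : E} (hu : u ≠ 0)
    (hsupport : ∀ z, f z ≤ c → ⟪u, z - q⟫ ≤ 0) (hw : 0 ≤ ⟪u, w - q⟫) : c ≤ f w := by
  -- moving from `w` along `u` enters the open half-space, where `f > c`
  have hbeyond : ∀ t : ℝ, 0 < t → c ≤ f (w + t • u) := by
    intro t ht
    by_contra! hlt
    have hinner : ⟪u, w + t • u - q⟫ = ⟪u, w - q⟫ + t * ‖u‖ ^ 2 := by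
      rw [add_sub_right_comm, inner_add_right, real_inner_smul_right, real_inner_self_eq_norm_sq]
    have hpos : 0 < t * ‖u‖ ^ 2 := mul_pos ht (pow_pos (norm_pos_iff.2 hu) 2)
    linarith [hsupport _ hlt.le]
  have hlim : Filter.Tendsto (fun t : ℝ => f (w + t • u)) (nhdsWithin 0 (Set.Ioi 0))
      (nhds (f w)) := by
    have hcont : Continuous fun t : ℝ => f (w + t • u) := by fun_prop
    simpa using (hcont.tendsto 0).mono_left nhdsWithin_le_nhds
  exact ge_of_tendsto hlim (eventually_mem_nhdsWithin.mono hbeyond)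

lemma norm_sub_sq_le_of_inner_nonpos {v q p : E} (h : ⟪v - q, p - q⟫ ≤ 0) :
    ‖q - p‖ ^ 2 ≤ ‖v - p‖ ^ 2 - ‖v - q‖ ^ 2 := by
  have hexpand := norm_sub_sq_real (v - q) (p - q)
  rw [sub_sub_sub_cancel_right, norm_sub_rev p q] at hexpand
  linarith

end Projection

section HalfspaceProj

variable {E : Type*} [NormedAddCommGroup E] [InnerProductSpace ℝ E]

/-- The projection onto the half-space `{z | ⟪s, z⟫ ≤ b}`. For `s = 0` it is the identity,
even when `b < 0` and the half-space is empty. -/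
noncomputable def halfspaceProj (s : E) (b : ℝ) (v : E) : E :=
  v - (max (⟪s, v⟫ - b) 0 / ‖s‖ ^ 2) • s

lemma norm_sub_halfspaceProj (s : E) (b : ℝ) (v : E) :
    ‖v - halfspaceProj s b v‖ = max (⟪s, v⟫ - b) 0 / ‖s‖ := by
  rw [halfspaceProj, sub_sub_cancel, norm_smul, Real.norm_of_nonneg (by positivity)]
  rcases eq_or_ne s 0 with rfl | hs
  · simp
  · field_simp

lemma inner_sub_halfspaceProj_nonpos {s p : E} {b : ℝ} (hp : ⟪s, p⟫ ≤ b) (v : E) :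
    ⟪v - halfspaceProj s b v, p - halfspaceProj s b v⟫ ≤ 0 := by
  rcases eq_or_ne s 0 with rfl | hs
  · simp [halfspaceProj]
  rcases le_total (⟪s, v⟫ - b) 0 with hin | hout
  · simp [halfspaceProj, max_eq_right hin]
  · have hboundary : ⟪s, halfspaceProj s b v⟫ = b := by
      rw [halfspaceProj, max_eq_left hout, inner_sub_right, real_inner_smul_right,
        real_inner_self_eq_norm_sq, div_mul_cancel₀ _ (by positivity), sub_sub_cancel]
    rw [show v - halfspaceProj s b v = (max (⟪s, v⟫ - b) 0 / ‖s‖ ^ 2) • s from sub_sub_cancel _ _,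
      real_inner_smul_left, inner_sub_right, hboundary]
    exact mul_nonpos_of_nonneg_of_nonpos (by positivity) (sub_nonpos.2 hp)

lemma norm_halfspaceProj_sub_halfspaceProj_le (s : E) (b : ℝ) (u v : E) :
    ‖halfspaceProj s b u - halfspaceProj s b v‖ ≤ ‖u - v‖ := by
  rcases eq_or_ne s 0 with rfl | hs
  · simp [halfspaceProj]
  set A := ⟪s, u⟫ - b with hA
  set B := ⟪s, v⟫ - b with hB
  set δ := max A 0 - max B 0 with hδ
  have hdiff : halfspaceProj s b u - halfspaceProj s b v = (u - v) - (δ / ‖s‖ ^ 2) • s := by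
    rw [halfspaceProj, halfspaceProj, ← hA, ← hB, hδ, sub_div]
    module
  have hinner : ⟪u - v, s⟫ = A - B := by
    rw [real_inner_comm, inner_sub_right, hA, hB]; ring
  have hmonotone : δ ^ 2 ≤ δ * (A - B) := by
    rcases le_total A 0 with h | h <;> rcases le_total B 0 with h' | h' <;>
      simp only [hδ, max_eq_left, max_eq_right, h, h'] <;> nlinarith
  refine le_of_sq_le_sq ?_ (norm_nonneg _)
  calc ‖halfspaceProj s b u - halfspaceProj s b v‖ ^ 2
      = ‖u - v‖ ^ 2 - (2 * (δ * (A - B)) - δ ^ 2) / ‖s‖ ^ 2 := by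
        rw [hdiff, norm_sub_sq_real, real_inner_smul_right, hinner, norm_smul, mul_pow,
          Real.norm_eq_abs, sq_abs]
        field_simp
        ring
    _ ≤ ‖u - v‖ ^ 2 := sub_le_self _ (div_nonneg (by nlinarith [sq_nonneg δ]) (by positivity))

lemma norm_halfspaceProj_sub_le {s x p : E} {b σ G : ℝ} (hσ : 0 ≤ σ) (hsG : ‖s‖ ≤ G)
    (hp : ⟪s, p⟫ ≤ b) (hdist : σ * ‖x - p‖ ≤ max (⟪s, x⟫ - b) 0) :
    ‖halfspaceProj s b x - p‖ ≤ √(1 - σ ^ 2 / G ^ 2) * ‖x - p‖ := by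
  have hstep : σ / G * ‖x - p‖ ≤ ‖x - halfspaceProj s b x‖ := by
    rw [norm_sub_halfspaceProj, div_mul_eq_mul_div]
    rcases eq_or_ne s 0 with rfl | hs
    · have hb : 0 ≤ b := by simpa using hp
      have hzero : σ * ‖x - p‖ ≤ 0 := by simpa [hb] using hdist
      simpa using div_nonpos_of_nonpos_of_nonneg hzero ((norm_nonneg _).trans hsG)
    · have : 0 < ‖s‖ := norm_pos_iff.2 hs
      gcongr
  have hG : 0 ≤ G := (norm_nonneg s).trans hsG
  rw [← Real.sqrt_sq (norm_nonneg (x - p)), ← Real.sqrt_mul' _ (sq_nonneg _)]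
  refine Real.le_sqrt_of_sq_le ?_
  calc ‖halfspaceProj s b x - p‖ ^ 2
      ≤ ‖x - p‖ ^ 2 - ‖x - halfspaceProj s b x‖ ^ 2 :=
        norm_sub_sq_le_of_inner_nonpos (inner_sub_halfspaceProj_nonpos hp x)
    _ ≤ ‖x - p‖ ^ 2 - (σ / G * ‖x - p‖) ^ 2 := by gcongr
    _ = (1 - σ ^ 2 / G ^ 2) * ‖x - p‖ ^ 2 := by ring

end HalfspaceProj

section ProjBall

variable {d : ℕ} {R : ℝ}

lemma projBall_mem_closedBall (hR : 0 < R) (v : EuclideanSpace ℝ (Fin d)) :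
    projBall R v ∈ Metric.closedBall 0 R := by
  have hmax : 0 < max R ‖v‖ := lt_max_of_lt_left hR
  rw [mem_closedBall_zero_iff, projBall, norm_smul, Real.norm_of_nonneg (by positivity),
    div_mul_eq_mul_div, div_le_iff₀ hmax]
  gcongr
  exact le_max_right _ _

lemma inner_sub_projBall_nonpos (hR : 0 < R) {p : EuclideanSpace ℝ (Fin d)}
    (hp : p ∈ Metric.closedBall 0 R) (v : EuclideanSpace ℝ (Fin d)) :
    ⟪v - projBall R v, p - projBall R v⟫ ≤ 0 := by
  rw [mem_closedBall_zero_iff] at hp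
  rcases le_total ‖v‖ R with hin | hout
  · simp [projBall, max_eq_left hin, hR.ne']
  have hv : 0 < ‖v‖ := hR.trans_le hout
  have hprod : ⟪v, p⟫ ≤ R * ‖v‖ := by
    calc ⟪v, p⟫ ≤ ‖v‖ * ‖p‖ := real_inner_le_norm v p
      _ ≤ R * ‖v‖ := by rw [mul_comm]; gcongr
  calc ⟪v - projBall R v, p - projBall R v⟫
      = (1 - R / ‖v‖) * (⟪v, p⟫ - R * ‖v‖) := by
        rw [projBall, max_eq_right hout, show v - (R / ‖v‖) • v = (1 - R / ‖v‖) • v by module,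
          real_inner_smul_left, inner_sub_right, real_inner_smul_right, real_inner_self_eq_norm_sq]
        field_simp
    _ ≤ 0 := mul_nonpos_of_nonneg_of_nonpos (sub_nonneg.2 ((div_le_one hv).2 hout))
        (sub_nonpos.2 hprod)

lemma norm_projBall_sub_le (hR : 0 < R) {p : EuclideanSpace ℝ (Fin d)}
    (hp : p ∈ Metric.closedBall 0 R) (v : EuclideanSpace ℝ (Fin d)) :
    ‖projBall R v - p‖ ≤ ‖v - p‖ := by
  have hpyth := norm_sub_sq_le_of_inner_nonpos (inner_sub_projBall_nonpos hR hp v)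
  exact le_of_sq_le_sq (hpyth.trans (sub_le_self _ (sq_nonneg _))) (norm_nonneg _)

end ProjBall

section ErrorBound

variable {d : ℕ} {g : EuclideanSpace ℝ (Fin d) → ℝ} {b c σ : ℝ}

/-- Every subgradient of `g` at a point of the level set `{z | g z = c}` has norm at least `σ`;
assumption (A4) is the case `c = -ε`. -/
def IsSteepAtLevel (g : EuclideanSpace ℝ (Fin d) → ℝ) (c σ : ℝ) : Prop :=
  ∀ z, g z = c → ∀ s, IsSubgradAt g z s → σ ≤ ‖s‖

lemma IsSubgradAt.sub_le_norm_mul_norm_sub {x s : EuclideanSpace ℝ (Fin d)}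
    (hs : IsSubgradAt g x s) (p : EuclideanSpace ℝ (Fin d)) : g x - g p ≤ ‖s‖ * ‖x - p‖ := by
  have hinner : -⟪s, p - x⟫ ≤ ‖s‖ * ‖x - p‖ := by
    rw [← inner_neg_right, neg_sub]
    exact real_inner_le_norm _ _
  linarith [hs p]

lemma exists_isSubgradAt_smul_sub (hg : ConvexOn ℝ Set.univ g) {x q : EuclideanSpace ℝ (Fin d)}
    (hx : c < g x) (hq : g q ≤ c) (hnormal : ∀ w, g w ≤ c → ⟪x - q, w - q⟫ ≤ 0) :
    g q = c ∧ ∃ μ : ℝ, 0 ≤ μ ∧ IsSubgradAt g q (μ • (x - q)) := by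
  have hxq : x - q ≠ 0 := by
    rw [sub_ne_zero]
    rintro rfl
    exact hx.not_ge hq
  have hhalf : ∀ w, 0 ≤ ⟪x - q, w - q⟫ → c ≤ g w := fun w =>
    le_of_inner_sub_nonneg hg.locallyLipschitz.continuous hxq hnormal
  have hgq : g q = c := hq.antisymm (hhalf q (by simp))
  have hconcave : ConcaveOn ℝ Set.univ fun w => ⟪x - q, w - q⟫ := by
    simp only [inner_sub_right (x - q) _ q]
    exact ((innerₗ _ (x - q)).concaveOn convex_univ).sub (convexOn_const _ convex_univ)
  obtain ⟨μ, hμ, hle⟩ := exists_lagrange_multiplier hg hconcave (fun w _ => hhalf w)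
    ⟨x, Set.mem_univ x, real_inner_self_pos.2 hxq⟩
  refine ⟨hgq, μ, hμ, fun w => ?_⟩
  rw [real_inner_smul_left, hgq]
  exact hle w (Set.mem_univ w)

namespace IsSteepAtLevel

lemma mul_infDist_le (hsteep : IsSteepAtLevel g c σ) (hg : ConvexOn ℝ Set.univ g)
    (hne : {z | g z ≤ c}.Nonempty) (x : EuclideanSpace ℝ (Fin d)) :
    σ * Metric.infDist x {z | g z ≤ c} ≤ max (g x - c) 0 := by
  rcases le_or_gt (g x) c with hin | hout
  · rw [Metric.infDist_zero_of_mem (show x ∈ {z | g z ≤ c} from hin), mul_zero]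
    exact le_max_right _ _
  have hconvex : Convex ℝ {z | g z ≤ c} := by simpa using hg.convex_le c
  obtain ⟨q, hq, hdist⟩ := exists_infDist_sublevel_eq_dist hg.locallyLipschitz.continuous hne x
  obtain ⟨hgq, μ, hμ, hsub⟩ := exists_isSubgradAt_smul_sub hg hout hq
    (inner_sub_nonpos_of_infDist_eq_dist hconvex hq hdist)
  rw [hdist, dist_eq_norm]
  calc σ * ‖x - q‖ ≤ ‖μ • (x - q)‖ * ‖x - q‖ := by
        gcongr
        exact hsteep q hgq _ hsub
    _ = ⟪μ • (x - q), x - q⟫ := by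
        rw [norm_smul, Real.norm_of_nonneg hμ, real_inner_smul_left, real_inner_self_eq_norm_sq]
        ring
    _ ≤ g x - c := by linarith [hsub x]
    _ ≤ max (g x - c) 0 := le_max_left _ _

lemma of_le (hsteep : IsSteepAtLevel g c σ) (hg : ConvexOn ℝ Set.univ g)
    (hne : {z | g z ≤ c}.Nonempty) (hcb : c ≤ b) : IsSteepAtLevel g b σ := by
  rcases hcb.eq_or_lt with rfl | hlt
  · exact hsteep
  intro z hz s hs
  obtain ⟨q, hq, hdist⟩ := exists_infDist_sublevel_eq_dist hg.locallyLipschitz.continuous hne z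
  have hzq : 0 < ‖z - q‖ := by
    rw [norm_sub_pos_iff]
    rintro rfl
    linarith
  refine le_of_mul_le_mul_right ?_ hzq
  calc σ * ‖z - q‖ ≤ max (g z - c) 0 := by
        rw [← dist_eq_norm, ← hdist]
        exact hsteep.mul_infDist_le hg hne z
    _ = g z - c := max_eq_left (by linarith)
    _ ≤ g z - g q := by gcongr
    _ ≤ ‖s‖ * ‖z - q‖ := hs.sub_le_norm_mul_norm_sub q

end IsSteepAtLevel

end ErrorBound

section FeasibilityStep

variable {d : ℕ} {g : EuclideanSpace ℝ (Fin d) → ℝ} {R ρ σ G : ℝ}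
  {x s : EuclideanSpace ℝ (Fin d)}

/-- The Polyak feasibility step from `y` for the linearization of `g` at `x` with slope `s`,
encoded as the projection onto the half-space `{z | g x + ⟪s, z - x⟫ + ρ ≤ 0}`. -/
noncomputable def polyakStep (g : EuclideanSpace ℝ (Fin d) → ℝ) (ρ : ℝ)
    (x s y : EuclideanSpace ℝ (Fin d)) : EuclideanSpace ℝ (Fin d) :=
  halfspaceProj s (⟪s, x⟫ - g x - ρ) y

lemma infDist_projBall_polyakStep_le (hg : Continuous g) (hR : 0 < R) (hσ : 0 ≤ σ)
    (hball : {z | g z ≤ -ρ} ⊆ Metric.closedBall 0 R) (hne : {z | g z ≤ -ρ}.Nonempty)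
    (hs : IsSubgradAt g x s) (hsG : ‖s‖ ≤ G)
    (herror : σ * Metric.infDist x {z | g z ≤ -ρ} ≤ max (g x + ρ) 0)
    (y : EuclideanSpace ℝ (Fin d)) :
    Metric.infDist (projBall R (polyakStep g ρ x s y)) {z | g z ≤ -ρ} ≤
      ‖y - x‖ + √(1 - σ ^ 2 / G ^ 2) * Metric.infDist x {z | g z ≤ -ρ} := by
  obtain ⟨p, hp, hdist⟩ := exists_infDist_sublevel_eq_dist hg hne x
  rw [hdist, dist_eq_norm] at herror ⊢
  have hcontract : ‖polyakStep g ρ x s x - p‖ ≤ √(1 - σ ^ 2 / G ^ 2) * ‖x - p‖ := by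
    refine norm_halfspaceProj_sub_le hσ hsG ?_ (herror.trans_eq (by ring_nf))
    linarith [hs p, inner_sub_right (𝕜 := ℝ) s p x]
  calc Metric.infDist (projBall R (polyakStep g ρ x s y)) {z | g z ≤ -ρ}
      ≤ ‖projBall R (polyakStep g ρ x s y) - p‖ := by
        rw [← dist_eq_norm]
        exact Metric.infDist_le_dist_of_mem hp
    _ ≤ ‖polyakStep g ρ x s y - p‖ := norm_projBall_sub_le hR (hball hp) _
    _ ≤ ‖polyakStep g ρ x s y - polyakStep g ρ x s x‖ + ‖polyakStep g ρ x s x - p‖ :=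
        norm_sub_le_norm_sub_add_norm_sub _ _ _
    _ ≤ ‖y - x‖ + √(1 - σ ^ 2 / G ^ 2) * ‖x - p‖ :=
        add_le_add (norm_halfspaceProj_sub_halfspaceProj_le _ _ _ _) hcontract

lemma infDist_projBall_polyakStep_le_of_le {r : ℝ} (hg : Continuous g) (hR : 0 < R) (hσ : 0 ≤ σ)
    (hball : {z | g z ≤ -ρ} ⊆ Metric.closedBall 0 R) (hne : {z | g z ≤ -ρ}.Nonempty)
    (hs : IsSubgradAt g x s) (hsG : ‖s‖ ≤ G)
    (herror : σ * Metric.infDist x {z | g z ≤ -ρ} ≤ max (g x + ρ) 0)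
    (hdist : Metric.infDist x {z | g z ≤ -ρ} ≤ r) {y : EuclideanSpace ℝ (Fin d)}
    (hy : ‖y - x‖ ≤ (1 - √(1 - σ ^ 2 / G ^ 2)) * r) :
    Metric.infDist (projBall R (polyakStep g ρ x s y)) {z | g z ≤ -ρ} ≤ r := by
  calc Metric.infDist (projBall R (polyakStep g ρ x s y)) {z | g z ≤ -ρ}
      ≤ ‖y - x‖ + √(1 - σ ^ 2 / G ^ 2) * Metric.infDist x {z | g z ≤ -ρ} :=
        infDist_projBall_polyakStep_le hg hR hσ hball hne hs hsG herror y
    _ ≤ (1 - √(1 - σ ^ 2 / G ^ 2)) * r + √(1 - σ ^ 2 / G ^ 2) * r := by gcongr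
    _ = r := by ring

lemma projBall_polyakStep_eq_ite (g : EuclideanSpace ℝ (Fin d) → ℝ) (R ρ : ℝ)
    (x s y : EuclideanSpace ℝ (Fin d)) :
    projBall R (polyakStep g ρ x s y) = if s ≠ 0 then
        projBall R (y - ((max (g x + ⟪s, y - x⟫ + ρ) 0) / ‖s‖ ^ 2) • s)
      else projBall R y := by
  split_ifs with hs
  · rw [polyakStep, halfspaceProj, inner_sub_right]
    ring_nf
  · rw [not_not] at hs
    simp [polyakStep, halfspaceProj, hs]

lemma IsSubgradAt.nonpos_of_infDist_le (hs : IsSubgradAt g x s) (hg : Continuous g) (hG : 0 < G)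
    (hsG : ‖s‖ ≤ G) (hne : {z | g z ≤ -ρ}.Nonempty)
    (hdist : Metric.infDist x {z | g z ≤ -ρ} ≤ ρ / G) : g x ≤ 0 := by
  obtain ⟨p, hp, hpdist⟩ := exists_infDist_sublevel_eq_dist hg hne x
  rw [hpdist, dist_eq_norm] at hdist
  have hgrowth : g x - g p ≤ ρ := by
    calc g x - g p ≤ ‖s‖ * ‖x - p‖ := hs.sub_le_norm_mul_norm_sub p
      _ ≤ G * (ρ / G) := by gcongr
      _ = ρ := mul_div_cancel₀ ρ hG.ne'
  linarith

end FeasibilityStep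

lemma norm_div_smul_le {E : Type*} [NormedAddCommGroup E] [NormedSpace ℝ E] {v : E} {a M G : ℝ}
    (ha : 0 ≤ a) (hM : 0 < M) (hG : 0 ≤ G) (hv : ‖v‖ ≤ M) : ‖(a / (M * G)) • v‖ ≤ a / G := by
  calc ‖(a / (M * G)) • v‖ = a / (M * G) * ‖v‖ := by
        rw [norm_smul, Real.norm_of_nonneg (by positivity)]
    _ ≤ a / (M * G) * M := by gcongr
    _ = a / G := by rw [div_mul_eq_mul_div, mul_comm a, mul_div_mul_left _ _ hM.ne']

theorem stmt2_general {d T : ℕ} {R Gv Gg ε σ η ρ : ℝ}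
    (g : EuclideanSpace ℝ (Fin d) → ℝ)
    (v : ℕ → EuclideanSpace ℝ (Fin d) → EuclideanSpace ℝ (Fin d))
    (x y s : ℕ → EuclideanSpace ℝ (Fin d))
    (hR : 0 < R) (hGv : 0 < Gv) (hGg : 0 < Gg)
    (hgconv : ConvexOn ℝ Set.univ g)
    (hball : {z | g z ≤ 0} ⊆ Metric.closedBall 0 R)
    (hv : ∀ t ∈ Finset.Icc 1 T, ∀ z ∈ Metric.closedBall 0 R, ‖v t z‖ ≤ Gv)
    (hsubgrad : ∀ z ∈ Metric.closedBall 0 R, ∀ sz, IsSubgradAt g z sz → ‖sz‖ ≤ Gg)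
    (hσ : 0 ≤ σ) (hne : ∃ z, g z = -ε) (hsteep : IsSteepAtLevel g (-ε) σ)
    (hρ : 0 ≤ ρ) (hρε : ρ ≤ ε) (hx1 : g (x 1) ≤ -ρ)
    (hη : η = (1 - √(1 - σ ^ 2 / Gg ^ 2)) * ρ / (Gv * Gg))
    (hs : ∀ t ∈ Finset.Icc 1 T, IsSubgradAt g (x t) (s t))
    (hy : ∀ t ∈ Finset.Icc 1 T, y t = x t - η • v t (x t))
    (hupd : ∀ t ∈ Finset.Icc 1 T,
      x (t + 1) = if s t ≠ 0 then
          projBall R (y t - ((max (g (x t) + ⟪s t, y t - x t⟫ + ρ) 0) / ‖s t‖ ^ 2) • s t)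
        else projBall R (y t)) :
    ∀ t ∈ Finset.Icc 1 T, g (x t) ≤ 0 := by
  have hcont : Continuous g := hgconv.locallyLipschitz.continuous
  have hball' : {z | g z ≤ -ρ} ⊆ Metric.closedBall 0 R := fun z (hz : g z ≤ -ρ) =>
    hball (hz.trans (neg_nonpos.2 hρ))
  have hx1mem : x 1 ∈ {z | g z ≤ -ρ} := hx1
  have hne' : {z | g z ≤ -ρ}.Nonempty := ⟨x 1, hx1mem⟩
  have hsteep' : IsSteepAtLevel g (-ρ) σ :=
    hsteep.of_le hgconv (hne.imp fun _ => le_of_eq) (neg_le_neg hρε)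
  have hγ : √(1 - σ ^ 2 / Gg ^ 2) ≤ 1 := Real.sqrt_le_one.2 (sub_le_self _ (by positivity))
  have hdisp : ∀ t ∈ Finset.Icc 1 T, x t ∈ Metric.closedBall 0 R →
      ‖y t - x t‖ ≤ (1 - √(1 - σ ^ 2 / Gg ^ 2)) * (ρ / Gg) := fun t ht hxt => by
    rw [hy t ht, sub_sub_cancel_left, norm_neg, hη, ← mul_div_assoc]
    exact norm_div_smul_le (mul_nonneg (sub_nonneg.2 hγ) hρ) hGv hGg.le (hv t ht _ hxt)
  have hinv : ∀ t, 1 ≤ t → t ≤ T → x t ∈ Metric.closedBall 0 R ∧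
      Metric.infDist (x t) {z | g z ≤ -ρ} ≤ ρ / Gg := by
    intro t ht
    induction t, ht using Nat.le_induction with
    | base =>
      exact fun _ => ⟨hball' hx1mem, (Metric.infDist_zero_of_mem hx1mem).trans_le (by positivity)⟩
    | succ t ht ih =>
      intro htT
      have hmem : t ∈ Finset.Icc 1 T := Finset.mem_Icc.2 ⟨ht, by lia⟩
      obtain ⟨hxt, hdist⟩ := ih (by lia)
      rw [hupd t hmem, ← projBall_polyakStep_eq_ite]
      exact ⟨projBall_mem_closedBall hR _,
        infDist_projBall_polyakStep_le_of_le hcont hR hσ hball' hne' (hs t hmem)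
          (hsubgrad _ hxt _ (hs t hmem))
          (by simpa only [sub_neg_eq_add] using hsteep'.mul_infDist_le hgconv hne' (x t))
          hdist (hdisp t hmem hxt)⟩
  intro t ht
  obtain ⟨ht1, htT⟩ := Finset.mem_Icc.1 ht
  obtain ⟨hxt, hdist⟩ := hinv t ht1 htT
  exact (hs t ht).nonpos_of_infDist_le hcont hGg (hsubgrad _ hxt _ (hs t ht)) hne' hdist

theorem stmt2 {d T : ℕ} (hT : 1 ≤ T)
    {R Gf Gg ε σ η ρ α : ℝ}
    (g : EuclideanSpace ℝ (Fin d) → ℝ)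
    (f : ℕ → EuclideanSpace ℝ (Fin d) → ℝ)
    (x y s : ℕ → EuclideanSpace ℝ (Fin d))
    (hR : 0 < R) (hGf : 0 < Gf) (hGg : 0 < Gg)
    (hgconv : ConvexOn ℝ Set.univ g)
    (hA1 : {z : EuclideanSpace ℝ (Fin d) | g z ≤ 0} ⊆ Metric.closedBall 0 R)
    (hfconv : ∀ t ∈ Finset.Icc 1 T, ConvexOn ℝ Set.univ (f t))
    (hfdiff : ∀ t ∈ Finset.Icc 1 T, Differentiable ℝ (f t))
    (hA2 : ∀ t ∈ Finset.Icc 1 T, ∀ z ∈ Metric.closedBall (0 : EuclideanSpace ℝ (Fin d)) R,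
      ‖gradient (f t) z‖ ≤ Gf)
    (hA3 : ∀ z ∈ Metric.closedBall (0 : EuclideanSpace ℝ (Fin d)) R,
      ∀ sz, IsSubgradAt g z sz → ‖sz‖ ≤ Gg)
    (hσ : 0 < σ) (hε : 0 < ε) (hσGg : σ ≤ Gg)
    (hA4ne : ∃ z, g z = -ε)
    (hA4 : ∀ z : EuclideanSpace ℝ (Fin d), g z = -ε → ∀ sz, IsSubgradAt g z sz → σ ≤ ‖sz‖)
    (hα : 0 < α) (hαε : α ≤ ε)
    (hx1g : g (x 1) ≤ -α)
    (hρdef : ρ = α / Real.sqrt T)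
    (hηdef : η = (1 - Real.sqrt (1 - σ ^ 2 / Gg ^ 2)) * ρ / (Gf * Gg))
    (hs : ∀ t ∈ Finset.Icc 1 T, IsSubgradAt g (x t) (s t))
    (hy : ∀ t ∈ Finset.Icc 1 T, y t = x t - η • gradient (f t) (x t))
    (hupd : ∀ t ∈ Finset.Icc 1 T,
      x (t + 1) = if s t ≠ 0 then
          projBall R (y t - ((max (g (x t) + ⟪s t, y t - x t⟫ + ρ) 0) / ‖s t‖ ^ 2) • s t)
        else projBall R (y t))
    :
    ∀ t ∈ Finset.Icc 1 T, g (x t) ≤ 0 := by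
  have hρα : ρ ≤ α := hρdef ▸ div_le_self hα.le (Real.one_le_sqrt.2 (mod_cast hT))
  exact stmt2_general g (fun t => gradient (f t)) x y s hR hGf hGg hgconv hA1 hA2 hA3 hσ.le hA4ne
    hA4 (hρdef ▸ by positivity) (hρα.trans hαε) (hx1g.trans (neg_le_neg hρα)) hηdef hs hy hupd
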